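/- Let R be a one-dimensional Cohen-Macaulay local ring with maximal ideal m. Then the R-module Hom_R(m, R) has minimal multiplicity if and only if R has minimal multiplicity as a ring. -/

import Mathlib

/-!
The equality `m² M = x m M` for `M = Hom(m, R)` is equivalent to `m² = x m`. One implication holds for
every module. For the other (`sq_eq_of_dual`), either some functional on `m` takes a unit value and
`M` surjects onto `R`, or all functionals map `m` to itself, and then `m M` is a copy of `m`.

For a minimal reduction `x` of `m`, which is a regular element, `e(R) = ℓ(R/x)`, so that
`ℓ(R/xm) = 1 + e(R)`, while `ℓ(R/m²) = 1 + embdim R`. Hence `m² = x m` if and only if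
`e(R) = embdim R` (`sq_eq_iff`).

It remains to produce a minimal reduction when `e(R) = embdim R` (`exists_reduction`). Since the residue
field is infinite, some `x ∈ m` has its class in degree one outside all associated primes of the
associated graded ring that do not contain the irrelevant ideal. The kernel of multiplication by that
class is then annihilated by a power of the irrelevant ideal and, being finitely generated, vanishes in
high degrees (`exists_superficial`). As `mⁿ/mⁿ⁺¹` has constant length for large `n`, multiplication by
`x` is eventually bijective on the graded pieces, and `mⁿ⁺¹ = x mⁿ` by Nakayama's lemma. The
associated graded ring is treated as a quotient of the Rees algebra, which is Noetherian.
-/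

open IsLocalRing Filter

section Defs

variable (R : Type*) [CommRing R]

/-- The length of an `R`-module `M`: the Krull dimension of its lattice of submodules. -/
noncomputable def mlen (M : Type*) [AddCommGroup M] [Module R M] : WithBot ℕ∞ :=
  Order.krullDim (Submodule R M)

/-- The minimal number of generators of an `R`-module. -/
noncomputable def mu (M : Type*) [AddCommGroup M] [Module R M] : ℕ :=
  sInf {n | ∃ s : Finset M, s.card = n ∧ Submodule.span R (s : Set M) = ⊤}

/-- The Hilbert–Samuel multiplicity `e_R(I, M)` of a finitely generated module over a
one-dimensional local ring with respect to an `m`-primary ideal `I`: the eventual value of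
`ℓ(M/I^{n+1}M) - ℓ(M/I^n M)`. -/
noncomputable def hsMult (I : Ideal R) (M : Type*) [AddCommGroup M] [Module R M] : ℕ∞ := by
  classical
  exact if h : ∃ e : ℕ∞, ∀ᶠ n in atTop,
      mlen R (M ⧸ (I ^ (n + 1) • (⊤ : Submodule R M))) =
        mlen R (M ⧸ (I ^ n • (⊤ : Submodule R M))) + (e : WithBot ℕ∞)
    then h.choose else 0

/-- The length of the subquotient `P/Q` for submodules `Q ⊆ P` of `M`. -/
noncomputable def qlen {M : Type*} [AddCommGroup M] [Module R M]
    (P Q : Submodule R M) : WithBot ℕ∞ :=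
  mlen R (↥P ⧸ Q.comap P.subtype)

/-- `(x)` is a minimal reduction of `I` (one-dimensional situation): a principal subideal with
`I^{n+1} = x I^n` for all large `n`. -/
def IsMinimalReduction (I : Ideal R) (x : R) : Prop :=
  x ∈ I ∧ ∃ N : ℕ, ∀ n ≥ N, I ^ (n + 1) = Ideal.span {x} * I ^ n

/-- A module is torsion-free if non zero-divisors of `R` act injectively. -/
def TorsionFree (M : Type*) [AddCommGroup M] [Module R M] : Prop :=
  ∀ r ∈ nonZeroDivisors R, ∀ m : M, r • m = 0 → m = 0

/-- The embedding dimension of a local ring: the minimal number of generators of the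
maximal ideal. -/
noncomputable def embdim (R : Type*) [CommRing R] [IsLocalRing R] : ℕ :=
  sInf {n | ∃ s : Finset R, s.card = n ∧ Ideal.span (s : Set R) = maximalIdeal R}

/-- A Noetherian local ring is regular iff its embedding dimension equals its Krull
dimension. -/
def IsRegularLocal (R : Type*) [CommRing R] [IsLocalRing R] : Prop :=
  ((embdim R : ℕ∞) : WithBot ℕ∞) = ringKrullDim R

/-- The colon `(J :_Q K)` of two `R`-submodules of an `R`-algebra `Q`. -/
def colonQ {Q : Type*} [CommRing Q] [Algebra R Q] (J K : Submodule R Q) : Submodule R Q where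
  carrier := {q | ∀ k ∈ K, q * k ∈ J}
  add_mem' := by
    intro a b ha hb k hk
    simpa [add_mul] using J.add_mem (ha k hk) (hb k hk)
  zero_mem' := by intro k hk; rw [zero_mul]; exact J.zero_mem
  smul_mem' := by
    intro c a ha k hk
    simpa [smul_mul_assoc] using J.smul_mem c (ha k hk)

end Defs

/-! ### Colengths -/

/-- The colength `ℓ(M / I)` of a submodule `I` of `M`, with values in `ℕ∞`. -/
noncomputable def colen {R M : Type*} [CommRing R] [AddCommGroup M] [Module R M]
    (I : Submodule R M) : ℕ∞ :=
  Module.length R (M ⧸ I)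

lemma colen_eq_add {R M : Type*} [CommRing R] [AddCommGroup M] [Module R M]
    {I J : Submodule R M} (h : I ≤ J) :
    colen I = Module.length R (↥J ⧸ I.submoduleOf J) + colen J := by
  have hle : I.submoduleOf J ≤ I.comap J.subtype := le_rfl
  refine Module.length_eq_add_of_exact (Submodule.mapQ (I.submoduleOf J) I J.subtype hle)
    (Submodule.factor h) ?_ (Submodule.factor_surjective h) ?_
  · rw [← LinearMap.ker_eq_bot]
    exact Submodule.ker_liftQ_eq_bot _ _ _ (by
      intro y hy
      simpa [Submodule.submoduleOf] using hy)
  · intro y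
    obtain ⟨y, rfl⟩ := Submodule.mkQ_surjective _ y
    constructor
    · intro hy
      have : y ∈ J := by simpa using hy
      exact ⟨Submodule.Quotient.mk ⟨y, this⟩, by simp⟩
    · rintro ⟨z, hz⟩
      obtain ⟨z, rfl⟩ := Submodule.mkQ_surjective _ z
      rw [← hz]
      simp

lemma colen_map {R M : Type*} [CommRing R] [AddCommGroup M] [Module R M] (f : M →ₗ[R] M)
    (hf : Function.Injective f) (I : Submodule R M) :
    colen (I.map f) = colen I + colen (LinearMap.range f) := by
  have hle : I ≤ (I.map f).comap f := Submodule.le_comap_map f I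
  have hle2 : I.map f ≤ LinearMap.range f := LinearMap.map_le_range
  refine Module.length_eq_add_of_exact (Submodule.mapQ I (I.map f) f hle)
    (Submodule.factor hle2) ?_ (Submodule.factor_surjective hle2) ?_
  · rw [← LinearMap.ker_eq_bot]
    exact Submodule.ker_liftQ_eq_bot _ _ _ (by
      intro y hy
      simpa [hf.eq_iff] using hy)
  · intro y
    obtain ⟨y, rfl⟩ := Submodule.mkQ_surjective _ y
    constructor
    · intro hy
      have : y ∈ LinearMap.range f := by simpa using hy
      obtain ⟨z, rfl⟩ := this
      exact ⟨Submodule.Quotient.mk z, by simp⟩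
    · rintro ⟨z, hz⟩
      obtain ⟨z, rfl⟩ := Submodule.mkQ_surjective _ z
      rw [← hz]
      simp

lemma colen_span_mul {R : Type*} [CommRing R] {x : R} (hx : x ∈ nonZeroDivisors R)
    (I : Ideal R) : colen (Ideal.span {x} * I) = colen I + colen (Ideal.span {x}) := by
  have hinj : Function.Injective (LinearMap.mulLeft R x) := fun a b h =>
    (mul_cancel_left_mem_nonZeroDivisors hx).1 h
  have h1 : Ideal.span {x} * I = Submodule.map (LinearMap.mulLeft R x) I := by
    ext y
    rw [Ideal.mem_span_singleton_mul]
    rfl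
  have h2 : Ideal.span {x} = LinearMap.range (LinearMap.mulLeft R x) := by
    ext y
    rw [Ideal.mem_span_singleton']
    simp [mul_comm]
  rw [h1, h2, colen_map _ hinj]

lemma eq_of_colen_eq {R M : Type*} [CommRing R] [AddCommGroup M] [Module R M]
    {I J : Submodule R M} (h : I ≤ J) (hfin : colen I ≠ ⊤) (heq : colen I = colen J) : I = J := by
  have h1 := colen_eq_add h
  have h2 : Module.length R (↥J ⧸ I.submoduleOf J) = 0 := by
    rw [heq] at h1 hfin
    have : 0 + colen J = Module.length R (↥J ⧸ I.submoduleOf J) + colen J := by rw [zero_add, ← h1]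
    exact (WithTop.add_right_cancel hfin this).symm
  rw [Module.length_eq_zero_iff, Submodule.Quotient.subsingleton_iff] at h2
  exact le_antisymm h (Submodule.submoduleOf_eq_top.1 h2)

section
variable {R : Type*} [CommRing R]

lemma mlen_quot (I : Ideal R) (n : ℕ) :
    mlen R (R ⧸ (I ^ n • (⊤ : Submodule R R))) = ((colen (I ^ n) : ℕ∞) : WithBot ℕ∞) := by
  have : (I ^ n • (⊤ : Submodule R R)) = I ^ n := by simp
  rw [this, colen, Module.coe_length]
  rfl

variable [IsLocalRing R]

lemma embdim_eq : embdim R = (maximalIdeal R).spanFinrank := by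
  rw [Submodule.spanFinrank_eq_iInf, iInf, embdim]
  congr 1
  ext n
  simp only [Set.mem_ofPred_eq, Set.mem_range, Subtype.exists]
  exact ⟨fun ⟨s, h1, h2⟩ => ⟨s, h2, h1⟩, fun ⟨s, h2, h1⟩ => ⟨s, h1, h2⟩⟩

variable [IsNoetherianRing R]

lemma colen_sq : colen (maximalIdeal R ^ 2) = 1 + (embdim R : ℕ∞) := by
  have hle : maximalIdeal R ^ 2 ≤ maximalIdeal R := Ideal.pow_le_self two_ne_zero
  rw [colen_eq_add hle, add_comm]
  congr 1
  · have : IsSimpleModule R (R ⧸ maximalIdeal R) :=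
      isSimpleModule_iff_isCoatom.2 (maximalIdeal.isMaximal R).out
    exact Module.length_eq_one R _
  · have h1 : (maximalIdeal R ^ 2).submoduleOf (maximalIdeal R) =
        maximalIdeal R • (⊤ : Submodule R (maximalIdeal R)) := by
      rw [← Submodule.ker_mkQ (maximalIdeal R • (⊤ : Submodule R (maximalIdeal R)))]
      ext y
      exact (Ideal.mem_toCotangent_ker (maximalIdeal R)).symm
    rw [h1, embdim_eq, spanFinrank_maximalIdeal_eq_finrank_cotangentSpace,
      ← Module.length_eq_finrank]
    exact Module.length_eq_of_surjective
      (M := CotangentSpace R) (S := R) (R := ResidueField R) residue_surjective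

lemma colen_pow_ne_top (n : ℕ) : colen (maximalIdeal R ^ n) ≠ ⊤ := by
  have : IsArtinianRing (R ⧸ maximalIdeal R ^ n) := by
    by_cases hn : n = 0
    · subst hn
      have : Subsingleton (R ⧸ maximalIdeal R ^ 0) := by
        rw [Ideal.Quotient.subsingleton_iff]; simp
      infer_instance
    have : Nontrivial (R ⧸ maximalIdeal R ^ n) :=
      Ideal.Quotient.nontrivial_iff.2 fun h =>
        (maximalIdeal.isMaximal R).ne_top (top_le_iff.1 (h ▸ Ideal.pow_le_self hn))
    have : IsLocalRing (R ⧸ maximalIdeal R ^ n) :=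
      .of_surjective' _ Ideal.Quotient.mk_surjective
    rw [isArtinianRing_iff_isNilpotent_maximalIdeal]
    refine ⟨n, ?_⟩
    rw [← map_maximalIdeal_of_surjective (Ideal.Quotient.mk (maximalIdeal R ^ n))
      Ideal.Quotient.mk_surjective, ← Ideal.map_pow, Ideal.map_quotient_self]
    rfl
  have : IsArtinian R (R ⧸ maximalIdeal R ^ n) :=
    isArtinian_of_surjective_algebraMap (Ideal.Quotient.mk_surjective (I := maximalIdeal R ^ n))
  exact Module.length_ne_top (R := R) (M := R ⧸ maximalIdeal R ^ n)

/-- The eventual increment of the Hilbert–Samuel function is unique, since the colengths of the powers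
of `m` are finite. -/
lemma hsMult_eq (e : ℕ∞) (h : ∀ᶠ n in atTop, colen (maximalIdeal R ^ (n + 1)) =
    colen (maximalIdeal R ^ n) + e) : hsMult R (maximalIdeal R) R = e := by
  have key : ∀ e : ℕ∞, (∀ᶠ n in atTop,
      mlen R (R ⧸ (maximalIdeal R ^ (n + 1) • (⊤ : Submodule R R))) =
        mlen R (R ⧸ (maximalIdeal R ^ n • (⊤ : Submodule R R))) + (e : WithBot ℕ∞)) ↔
      ∀ᶠ n in atTop, colen (maximalIdeal R ^ (n + 1)) = colen (maximalIdeal R ^ n) + e := by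
    intro e
    simp only [mlen_quot]
    norm_cast
  have h' := (key e).2 h
  rw [hsMult, dif_pos ⟨e, h'⟩]
  have h2 := (key _).1 (Exists.choose_spec (⟨e, h'⟩ : ∃ e : ℕ∞, ∀ᶠ n in atTop,
      mlen R (R ⧸ (maximalIdeal R ^ (n + 1) • (⊤ : Submodule R R))) =
        mlen R (R ⧸ (maximalIdeal R ^ n • (⊤ : Submodule R R))) + (e : WithBot ℕ∞)))
  obtain ⟨n, hn, hn'⟩ := (h.and h2).exists
  rw [hn] at hn'
  exact (WithTop.add_left_cancel (colen_pow_ne_top n) hn').symm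

/-- A nonzero value of `hsMult` is not the junk value, so it is the eventual increment of the
Hilbert–Samuel function. -/
lemma hsMult_spec (h0 : hsMult R (maximalIdeal R) R ≠ 0) :
    ∀ᶠ n in atTop, colen (maximalIdeal R ^ (n + 1)) =
      colen (maximalIdeal R ^ n) + hsMult R (maximalIdeal R) R := by
  by_cases h : ∃ e : ℕ∞, ∀ᶠ n in atTop, colen (maximalIdeal R ^ (n + 1)) =
      colen (maximalIdeal R ^ n) + e
  · obtain ⟨e, he⟩ := h
    rwa [hsMult_eq e he]
  · refine absurd ?_ h0
    rw [hsMult, dif_neg]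
    simp only [mlen_quot]
    exact_mod_cast h

end

/-! ### Superficial elements, via the associated graded ring -/

section
open Polynomial

/-- Over an infinite residue field, `m` is not a finite union of proper submodules containing
`m ^ 2`: pass to the cotangent space, which is not a finite union of proper subspaces. -/
lemma exists_notMem_of_finite {R : Type*} [CommRing R] [IsLocalRing R]
    [Infinite (ResidueField R)] {ι : Type*} (s : Set ι) (hs : s.Finite)
    (W : ι → Submodule R (maximalIdeal R))
    (hW : ∀ i ∈ s, LinearMap.ker (maximalIdeal R).toCotangent ≤ W i) (hW' : ∀ i ∈ s, W i ≠ ⊤) :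
    ∃ a : maximalIdeal R, ∀ i ∈ s, a ∉ W i := by
  classical
  let V : ι → Subspace (ResidueField R) (CotangentSpace R) := fun i =>
    { carrier := (W i).map (maximalIdeal R).toCotangent
      add_mem' := fun ha hb => Submodule.add_mem _ ha hb
      zero_mem' := Submodule.zero_mem _
      smul_mem' := by
        intro c v hv
        obtain ⟨c, rfl⟩ := residue_surjective c
        exact Submodule.smul_mem _ c hv }
  have hV : ∀ i ∈ s, ∀ a : maximalIdeal R, (maximalIdeal R).toCotangent a ∈ V i → a ∈ W i := by
    rintro i hi a ⟨b, hb, hab⟩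
    have : a - b ∈ W i := hW i hi (by rw [LinearMap.mem_ker, map_sub, hab, sub_self])
    simpa using (W i).add_mem this hb
  have hcov := Subspace.biUnion_ne_univ_of_top_notMem (s := hs.toFinset.image V) (by
    intro h
    obtain ⟨i, hi, hit⟩ := Finset.mem_image.1 h
    have hi' : i ∈ s := by simpa using hi
    exact hW' i hi' (top_le_iff.1 fun a _ => hV i hi' a (hit ▸ Submodule.mem_top)))
  obtain ⟨v, hv⟩ := (Set.ne_univ_iff_exists_notMem _).1 hcov
  obtain ⟨a, rfl⟩ := (maximalIdeal R).toCotangent_surjective v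
  refine ⟨a, fun i hi ha => hv ?_⟩
  simp only [Set.mem_iUnion]
  exact ⟨V i, Finset.mem_image_of_mem _ (by simpa using hi), ⟨a, ha, rfl⟩⟩

variable {R : Type*} [CommRing R] (I : Ideal R)

/-- The ideal `⨁ I ^ (n + 1) tⁿ` of the Rees algebra `⨁ Iⁿ tⁿ`; the quotient is the associated
graded ring of `I`. -/
def grIdeal : Ideal (reesAlgebra I) where
  carrier := {f | ∀ n, (f : R[X]).coeff n ∈ I ^ (n + 1)}
  add_mem' := fun ha hb n => by simpa using add_mem (ha n) (hb n)
  zero_mem' := fun n => by simp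
  smul_mem' := fun c f hf n => by
    simp only [smul_eq_mul, MulMemClass.coe_mul, coeff_mul]
    refine Ideal.sum_mem _ fun p hp => ?_
    have := Ideal.mul_mem_mul (c.2 p.1) (hf p.2)
    rwa [← pow_add, ← add_assoc, Finset.HasAntidiagonal.mem_antidiagonal.1 hp] at this

variable {I} in
/-- The homogeneous element `a tⁿ` of the Rees algebra. -/
noncomputable def reesMon (n : ℕ) (a : R) (ha : a ∈ I ^ n) : reesAlgebra I :=
  ⟨monomial n a, reesAlgebra.monomial_mem.2 ha⟩

lemma reesMon_mem_grIdeal {n : ℕ} {a : R} (ha : a ∈ I ^ n) :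
    reesMon n a ha ∈ grIdeal I ↔ a ∈ I ^ (n + 1) := by
  constructor
  · intro h
    simpa [reesMon] using h n
  · intro h k
    simp only [reesMon, coeff_monomial]
    split_ifs with hk
    · exact hk ▸ h
    · exact zero_mem _

/-- The ideal of the Rees algebra generated by the elements of degree one. -/
noncomputable def reesPos : Ideal (reesAlgebra I) :=
  Ideal.span {f | ∃ (a : R) (ha : a ∈ I ^ 1), f = reesMon 1 a ha}

lemma reesMon_mem_reesPos_pow (n : ℕ) (a : R) (ha : a ∈ I ^ n) :
    reesMon n a ha ∈ reesPos I ^ n := by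
  induction n generalizing a with
  | zero => simp
  | succ n ih =>
    suffices h : ∀ b (hb : b ∈ I ^ n * I),
        reesMon (n + 1) b (by rwa [pow_succ]) ∈ reesPos I ^ (n + 1) from
      h a (by rwa [← pow_succ])
    intro b hb
    induction hb using Submodule.mul_induction_on' with
    | mem_mul_mem x hx y hy =>
      have h1 : reesMon 1 y (by simpa using hy) ∈ reesPos I :=
        Ideal.subset_span ⟨y, by simpa using hy, rfl⟩
      have := Ideal.mul_mem_mul (ih x hx) h1
      rw [← pow_succ] at this
      convert this using 1
      exact Subtype.ext (by simp [reesMon, monomial_mul_monomial])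
    | add x hx y hy h1 h2 =>
      convert add_mem h1 h2 using 1
      exact Subtype.ext (by simp [reesMon])

/-- If a power of the irrelevant ideal annihilates the image of `K` in the associated graded ring,
then that image lives in bounded degrees: `K` is finitely generated, and in a combination of the
generators the coefficients of high degree contribute nothing. -/
lemma exists_bound [IsNoetherianRing R] (K : Ideal (reesAlgebra I)) (c : ℕ)
    (hc : reesPos I ^ c * K ≤ grIdeal I) :
    ∃ N, ∀ f ∈ K, ∀ n ≥ N, (f : R[X]).coeff n ∈ I ^ (n + 1) := by
  obtain ⟨s, hs⟩ := (isNoetherianRing_iff_ideal_fg _).1 inferInstance K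
  refine ⟨c + s.sup (fun g => (g : R[X]).natDegree), fun f hf n hn => ?_⟩
  rw [← hs] at hf
  obtain ⟨h, -, rfl⟩ := Submodule.mem_span_finset.1 hf
  simp only [smul_eq_mul, AddSubmonoidClass.coe_finsetSum, MulMemClass.coe_mul, finsetSum_coeff]
  refine Ideal.sum_mem _ fun g hg => ?_
  rw [coeff_mul]
  refine Ideal.sum_mem _ fun p hp => ?_
  rw [Finset.HasAntidiagonal.mem_antidiagonal] at hp
  by_cases hd : (g : R[X]).natDegree < p.2
  · rw [coeff_eq_zero_of_natDegree_lt hd, mul_zero]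
    exact zero_mem _
  have h1 : (g : R[X]).natDegree ≤ s.sup (fun g => (g : R[X]).natDegree) :=
    Finset.le_sup (f := fun g : reesAlgebra I => (g : R[X]).natDegree) hg
  have h2 : reesMon p.1 _ ((h g).2 p.1) ∈ reesPos I ^ c :=
    Ideal.pow_le_pow_right (by omega) (reesMon_mem_reesPos_pow I _ _ _)
  have h3 := hc (Ideal.mul_mem_mul h2 (hs.le (Submodule.subset_span hg))) n
  rw [← hp] at h3 ⊢
  rw [add_comm p.1 p.2] at h3 ⊢
  simpa [reesMon, coeff_monomial_mul] using h3

lemma le_radical_annihilator {S M : Type*} [CommRing S] [IsNoetherianRing S] [AddCommGroup M]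
    [Module S M] [Module.Finite S M] (J : Ideal S) (h : ∀ P ∈ associatedPrimes S M, J ≤ P) :
    J ≤ (Module.annihilator S M).radical := by
  rw [← Ideal.sInf_minimalPrimes]
  exact le_sInf fun P hP =>
    h P (Module.associatedPrimes.minimalPrimes_annihilator_subset_associatedPrimes S M hP)

/-- For `A` the set of associated primes of `S ⧸ J`: if every prime of `A` containing `ξ` contains
`T`, then a power of `T` annihilates the kernel of multiplication by `ξ` on `S ⧸ J`. The primes are
hidden behind an existential so that the module `S ⧸ J` need not be mentioned when `S` is a Rees
algebra. -/
lemma exists_finite_primes {S : Type*} [CommRing S] [IsNoetherianRing S] (J : Ideal S) :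
    ∃ A : Set (Ideal S), A.Finite ∧ (∀ P ∈ A, J ≤ P) ∧
      ∀ (T : Ideal S) (ξ : S), (∀ P ∈ A, ξ ∈ P → T ≤ P) →
        ∃ c, ∀ t ∈ T ^ c, ∀ f, ξ * f ∈ J → t * f ∈ J := by
  refine ⟨associatedPrimes S (S ⧸ J), associatedPrimes.finite _ _, fun P hP => ?_,
    fun T ξ h => ?_⟩
  · have := hP.annihilator_le
    rwa [Submodule.annihilator_top, Ideal.annihilator_quotient] at this
  let K : Submodule S (S ⧸ J) := LinearMap.ker (LinearMap.lsmul S (S ⧸ J) ξ)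
  have hass : ∀ P ∈ associatedPrimes S K, T ≤ P := by
    intro P hP
    refine h P (associatedPrimes.subset_of_injective K.injective_subtype hP) ?_
    refine hP.annihilator_le ?_
    rw [Submodule.annihilator_top, Module.mem_annihilator]
    exact fun k => Subtype.ext k.2
  obtain ⟨c, hc⟩ := Ideal.exists_pow_le_of_le_radical_of_fg (le_radical_annihilator _ hass)
    ((isNoetherianRing_iff_ideal_fg S).1 inferInstance _)
  refine ⟨c, fun t ht f hf => ?_⟩
  have hf' : Submodule.mkQ J f ∈ K := (Submodule.Quotient.mk_eq_zero J).2 hf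
  have h1 := Module.mem_annihilator.1 (hc ht) ⟨_, hf'⟩
  exact (Submodule.Quotient.mk_eq_zero J).1 (congrArg Subtype.val h1)

/-- The inclusion of `I` in the Rees algebra as its component of degree one. -/
noncomputable def reesOne : I →ₗ[R] reesAlgebra I where
  toFun a := reesMon 1 (a : R) (by simp)
  map_add' a b := Subtype.ext (by simp [reesMon])
  map_smul' c a := Subtype.ext (by simp [reesMon, smul_monomial])

/-- Existence of an element `x` of `m` whose class of degree one acts injectively on the associated
graded ring in high degrees: choose `x` outside the associated primes of that ring which do not
contain the irrelevant ideal. -/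
theorem exists_superficial [IsLocalRing R] [IsNoetherianRing R] [Infinite (ResidueField R)] :
    ∃ x ∈ maximalIdeal R, ∃ N, ∀ n ≥ N, ∀ a ∈ maximalIdeal R ^ n,
      x * a ∈ maximalIdeal R ^ (n + 2) → a ∈ maximalIdeal R ^ (n + 1) := by
  set m := maximalIdeal R with hm
  obtain ⟨A, hA, hJ, hc⟩ := exists_finite_primes (grIdeal m)
  obtain ⟨x, hx⟩ := exists_notMem_of_finite {P | P ∈ A ∧ ¬ reesPos m ≤ P}
    (hA.subset fun P hP => hP.1) (fun P => (P.restrictScalars R).comap (reesOne m))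
    (by
      rintro P ⟨hP, -⟩ a ha
      rw [LinearMap.mem_ker, Ideal.toCotangent_eq_zero] at ha
      exact hJ P hP ((reesMon_mem_grIdeal m (by simp)).2 ha))
    (by
      rintro P ⟨-, hP⟩ h
      refine hP (Ideal.span_le.2 ?_)
      rintro _ ⟨a, ha, rfl⟩
      have : (⟨a, by simpa using ha⟩ : m) ∈ (P.restrictScalars R).comap (reesOne m) :=
        h ▸ Submodule.mem_top
      exact this)
  obtain ⟨c, hc⟩ := hc (reesPos m) (reesOne m x) (fun P hP hxP => by
    by_contra hlt
    exact hx P ⟨hP, hlt⟩ hxP)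
  obtain ⟨N, hN⟩ := exists_bound m
    (Submodule.comap (LinearMap.mulLeft (reesAlgebra m) (reesOne m x)) (grIdeal m)) c
    (Ideal.mul_le.2 fun t ht f hf => hc t ht f hf)
  refine ⟨x, x.2, N, fun n hn a ha hxa => ?_⟩
  have h1 := hN (reesMon n a ha) (by
    change reesOne m x * reesMon n a ha ∈ grIdeal m
    have hxa' : (x : R) * a ∈ m ^ (1 + n) := by
      rw [pow_add]; exact Ideal.mul_mem_mul (by simp) ha
    have : reesOne m x * reesMon n a ha = reesMon (1 + n) (x * a) hxa' :=
      Subtype.ext (by simp [reesOne, reesMon, monomial_mul_monomial])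
    rw [this, reesMon_mem_grIdeal]
    convert hxa using 2
    omega) n hn
  simpa [reesMon] using h1

end

/-! ### The dual of the maximal ideal -/

section
variable {R : Type*} [CommRing R]

/-- Write `M = Hom(m, R)`. If some `f : M` takes a unit value at `a`, evaluation at `a` is a
surjection `M → R` and carries the hypothesis to `m ^ 2 = x m`. Otherwise every `f : M` has image in
`m`, and then `a • f = f a • ι` for `a ∈ m` with `ι` the inclusion of `m`, so that `m M` is the copy
`m ι` of `m`. -/
lemma sq_eq_of_dual [IsLocalRing R] (hCM : ∃ r ∈ maximalIdeal R, r ∈ nonZeroDivisors R) (x : R)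
    (h : (maximalIdeal R) ^ 2 • (⊤ : Submodule R (↥(maximalIdeal R) →ₗ[R] R)) =
          Ideal.span {x} •
            (maximalIdeal R • (⊤ : Submodule R (↥(maximalIdeal R) →ₗ[R] R)))) :
    maximalIdeal R ^ 2 = Ideal.span {x} * maximalIdeal R := by
  set m := maximalIdeal R with hm
  by_cases hf : ∃ (f : m →ₗ[R] R) (a : m), IsUnit (f a)
  · obtain ⟨f, a, u, hu⟩ := hf
    let ev : (m →ₗ[R] R) →ₗ[R] R := LinearMap.applyₗ a
    have hev : Submodule.map ev ⊤ = ⊤ := by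
      rw [Submodule.map_top, LinearMap.range_eq_top]
      intro y
      refine ⟨(y * ↑u⁻¹) • f, ?_⟩
      change (y * ↑u⁻¹) * f a = y
      rw [← hu, mul_assoc, Units.inv_mul, mul_one]
    have := congrArg (Submodule.map ev) h
    simpa [Submodule.map_smul'', hev] using this
  · push Not at hf
    obtain ⟨r, hr, hr0⟩ := hCM
    let φ : R →ₗ[R] (m →ₗ[R] R) := LinearMap.toSpanSingleton R _ m.subtype
    have hφ : Function.Injective φ := by
      rw [injective_iff_map_eq_zero]
      intro c hc
      have : c * r = 0 := LinearMap.congr_fun hc ⟨r, hr⟩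
      exact (mul_right_mem_nonZeroDivisors_eq_zero_iff hr0).1 this
    have key : m • (⊤ : Submodule R (m →ₗ[R] R)) = Submodule.map φ m := by
      apply le_antisymm
      · rw [Submodule.smul_le]
        intro a ha f _
        refine ⟨f ⟨a, ha⟩, (mem_maximalIdeal _).2 (hf f _), ?_⟩
        ext b
        change f ⟨a, ha⟩ * b = a * f b
        have h1 : f ((b : R) • ⟨a, ha⟩) = f (a • b) := congrArg f (Subtype.ext (mul_comm _ _))
        rw [map_smul, map_smul] at h1
        rw [mul_comm]
        exact h1
      · rintro _ ⟨c, hc, rfl⟩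
        exact Submodule.smul_mem_smul hc Submodule.mem_top
    rw [pow_two, ← smul_eq_mul, Submodule.smul_assoc, key, ← Submodule.map_smul'',
      ← Submodule.map_smul''] at h
    rw [pow_two]
    exact Submodule.map_injective_of_injective hφ h

/-! ### Minimal reductions and multiplicity -/

lemma IsMinimalReduction.mem_nonZeroDivisors {I : Ideal R} {x : R}
    (h : IsMinimalReduction R I x) (hI : ∃ r ∈ I, r ∈ nonZeroDivisors R) :
    x ∈ nonZeroDivisors R := by
  obtain ⟨-, N, hN⟩ := h
  obtain ⟨r, hr, hr0⟩ := hI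
  have h1 : r ^ (N + 1) ∈ Ideal.span {x} :=
    Ideal.mul_le_right (I := I ^ N) (by rw [mul_comm, ← hN N le_rfl]; exact Ideal.pow_mem_pow hr _)
  obtain ⟨y, hy⟩ := Ideal.mem_span_singleton'.1 h1
  exact (mul_mem_nonZeroDivisors.1 (hy ▸ pow_mem hr0 (N + 1))).2

variable [IsLocalRing R] [IsNoetherianRing R]

/-- If `x` is a minimal reduction of `m`, then `e(R) = ℓ(R/x)`, so `ℓ(R/xm) = 1 + e(R)`, whereas
`ℓ(R/m²) = 1 + embdim R`; as `xm ⊆ m²`, equality of the lengths means `m² = xm`. -/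
lemma sq_eq_iff (hCM : ∃ r ∈ maximalIdeal R, r ∈ nonZeroDivisors R) {x : R}
    (h : IsMinimalReduction R (maximalIdeal R) x) :
    maximalIdeal R ^ 2 = Ideal.span {x} * maximalIdeal R ↔
      hsMult R (maximalIdeal R) R = (embdim R : ℕ∞) := by
  have hx := h.mem_nonZeroDivisors hCM
  obtain ⟨hxm, N, hN⟩ := h
  have he : hsMult R (maximalIdeal R) R = colen (Ideal.span {x}) := by
    refine hsMult_eq _ ?_
    filter_upwards [eventually_ge_atTop N] with n hn
    rw [hN n hn, colen_span_mul hx]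
  have h1 : colen (maximalIdeal R) = 1 := by
    have : IsSimpleModule R (R ⧸ maximalIdeal R) :=
      isSimpleModule_iff_isCoatom.2 (maximalIdeal.isMaximal R).out
    exact Module.length_eq_one R _
  have h2 : colen (Ideal.span {x} * maximalIdeal R) = 1 + hsMult R (maximalIdeal R) R := by
    rw [colen_span_mul hx, h1, he]
  constructor
  · intro h
    rw [← h, colen_sq] at h2
    exact (WithTop.add_left_cancel ENat.one_ne_top h2).symm
  · intro h
    rw [h, ← colen_sq] at h2
    refine (eq_of_colen_eq ?_ ?_ h2).symm
    · rw [pow_two]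
      exact Ideal.mul_mono_left ((Ideal.span_singleton_le_iff_mem _).2 hxm)
    · rw [h2]; exact colen_pow_ne_top 2

/-- A superficial element `x` is a reduction: multiplication by `x` from `mⁿ/mⁿ⁺¹` to `mⁿ⁺¹/mⁿ⁺²` is
injective for large `n`, and both sides have the same finite length `e`, so it is surjective and
Nakayama's lemma gives `mⁿ⁺¹ = x mⁿ`. -/
lemma exists_reduction [Infinite (ResidueField R)] (e : ℕ∞)
    (he : ∀ᶠ n in atTop, colen (maximalIdeal R ^ (n + 1)) = colen (maximalIdeal R ^ n) + e) :
    ∃ x, IsMinimalReduction R (maximalIdeal R) x := by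
  obtain ⟨x, hx, N, hN⟩ := exists_superficial (R := R)
  obtain ⟨N', hN'⟩ := eventually_atTop.1 he
  set m := maximalIdeal R with hm
  have hle : ∀ n, m ^ (n + 1) ≤ m ^ n := fun n => Ideal.pow_le_pow_right (Nat.le_succ n)
  -- the length of `m ^ n / m ^ (n + 1)` is `e`
  have hlen : ∀ n ≥ N', Module.length R (↥(m ^ n) ⧸ (m ^ (n + 1)).submoduleOf (m ^ n)) = e := by
    intro n hn
    have h1 := colen_eq_add (hle n)
    rw [hN' n hn, add_comm] at h1
    exact (WithTop.add_right_cancel (colen_pow_ne_top n) h1).symm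
  have hfin : e ≠ ⊤ := by
    rintro rfl
    exact colen_pow_ne_top (R := R) (N' + 1) (by simpa using hN' N' le_rfl)
  have hxm : Ideal.span {x} ≤ m := (Ideal.span_singleton_le_iff_mem _).2 hx
  refine ⟨x, hx, max N N', fun n hn => ?_⟩
  have hxle : Ideal.span {x} * m ^ n ≤ m ^ (n + 1) := by
    rw [pow_succ']; exact Ideal.mul_mono_left hxm
  let f : ↥(m ^ n) →ₗ[R] ↥(m ^ (n + 1)) :=
    ((LinearMap.mulLeft R x).comp (m ^ n).subtype).codRestrict (m ^ (n + 1)) fun a =>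
      hxle (Ideal.mul_mem_mul (Ideal.mem_span_singleton_self x) a.2)
  have hf : (m ^ (n + 1)).submoduleOf (m ^ n) ≤
      ((m ^ (n + 1 + 1)).submoduleOf (m ^ (n + 1))).comap f := by
    intro a ha
    change x * a ∈ m ^ (n + 1 + 1)
    rw [pow_succ']
    exact Ideal.mul_mem_mul hx ha
  let g := Submodule.mapQ _ _ f hf
  have hginj : Function.Injective g := by
    rw [← LinearMap.ker_eq_bot]
    exact Submodule.ker_liftQ_eq_bot _ _ _ (by
      intro a ha
      rw [LinearMap.ker_comp, Submodule.ker_mkQ] at ha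
      exact hN n (le_trans (le_max_left _ _) hn) a a.2 ha)
  have hgsurj : Function.Surjective g := by
    have h1 := Module.length_eq_add_of_exact g (LinearMap.range g).mkQ hginj
      (Submodule.mkQ_surjective _) (LinearMap.exact_map_mkQ_range g)
    have hn' := le_trans (le_max_right _ _) hn
    rw [hlen n hn', hlen (n + 1) (by omega)] at h1
    have h2 := WithTop.add_left_cancel hfin ((add_zero e).trans h1)
    have h3 := Module.length_eq_zero_iff.1 h2.symm
    exact LinearMap.range_eq_top.1 (Submodule.Quotient.subsingleton_iff.1 h3)
  refine le_antisymm ?_ hxle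
  refine Submodule.le_of_le_smul_of_le_jacobson_bot (I := m) (m ^ (n + 1)).fg_of_isNoetherianRing
    (maximalIdeal_le_jacobson ⊥) ?_
  intro b hb
  obtain ⟨q, hq⟩ := hgsurj (Submodule.Quotient.mk ⟨b, hb⟩)
  obtain ⟨a, rfl⟩ := Submodule.mkQ_surjective _ q
  have h4 : f a - ⟨b, hb⟩ ∈ (m ^ (n + 1 + 1)).submoduleOf (m ^ (n + 1)) :=
    (Submodule.Quotient.eq _).1 hq
  have h5 : x * a - b ∈ m ^ (n + 1 + 1) := h4
  refine Submodule.mem_sup.2 ⟨x * a, Ideal.mul_mem_mul (Ideal.mem_span_singleton_self x) a.2,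
    -(x * a - b), neg_mem ?_, by ring⟩
  rwa [smul_eq_mul, ← pow_succ']

end

/-- `Hom_R(m, R)` has minimal multiplicity iff `R` has minimal multiplicity as a
ring. -/
theorem stmt12 (R : Type*) [CommRing R] [IsLocalRing R] [IsNoetherianRing R]
    [Infinite (ResidueField R)]
    (hdim : ringKrullDim R = 1)
    (hCM : ∃ r ∈ maximalIdeal R, r ∈ nonZeroDivisors R) :
    (∃ x : R, IsMinimalReduction R (maximalIdeal R) x ∧
        (maximalIdeal R) ^ 2 • (⊤ : Submodule R (↥(maximalIdeal R) →ₗ[R] R)) =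
          Ideal.span {x} •
            (maximalIdeal R • (⊤ : Submodule R (↥(maximalIdeal R) →ₗ[R] R)))) ↔
      hsMult R (maximalIdeal R) R = (embdim R : ℕ∞) := by
  constructor
  · rintro ⟨x, hx, h⟩
    exact (sq_eq_iff hCM hx).1 (sq_eq_of_dual hCM x h)
  · intro h
    -- `0` is also the junk value of `hsMult`; it is excluded since `m` contains a regular element.
    have hne : hsMult R (maximalIdeal R) R ≠ 0 := by
      rw [h, embdim_eq]
      intro h0
      obtain ⟨r, hr, hr0⟩ := hCM
      have h1 : maximalIdeal R = ⊥ :=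
        (Submodule.spanFinrank_eq_zero_iff_eq_bot
          (maximalIdeal R).fg_of_isNoetherianRing).1 (by exact_mod_cast h0)
      rw [h1, Ideal.mem_bot] at hr
      exact zero_notMem_nonZeroDivisors (hr ▸ hr0)
    obtain ⟨x, hx⟩ := exists_reduction _ (hsMult_spec hne)
    refine ⟨x, hx, ?_⟩
    rw [(sq_eq_iff hCM hx).2 h, ← smul_eq_mul, Submodule.smul_assoc]
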